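/- arXiv:1506.03628 — 3 statements merged into one kernel-verified Lean document; each statement's English description precedes it below -/
import Mathlib

section
/- Let ω > 0 and p > 1. Let u : ℝ² → ℝ be a smooth positive function solving (QLS) pointwise on ℝ², and assume u and all its partial derivatives up to order two decay exponentially: there exist C, δ > 0 with |∂^α u(x)| ≤ C e^{−δ|x|} for every multi-index α with |α| ≤ 2 and every x ∈ ℝ². Then the Pohozaev-type identity holds: ω ∫_{ℝ²} u² dx = (2/(p+1)) ∫_{ℝ²} u^{p+1} dx. -/
open MeasureTheory Real Filter Topology

noncomputable section

/-- Partial derivative along the `i`-th coordinate direction. -/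
def pd {N : ℕ} {F : Type*} [NormedAddCommGroup F] [NormedSpace ℝ F]
    (i : Fin N) (f : EuclideanSpace ℝ (Fin N) → F) (x : EuclideanSpace ℝ (Fin N)) : F :=
  fderiv ℝ f x (EuclideanSpace.single i 1)

/-- Euclidean Laplacian. -/
def lap {N : ℕ} {F : Type*} [NormedAddCommGroup F] [NormedSpace ℝ F]
    (f : EuclideanSpace ℝ (Fin N) → F) (x : EuclideanSpace ℝ (Fin N)) : F :=
  ∑ i : Fin N, pd i (pd i f) x

/-- Squared norm of the gradient of a real-valued function: `|∇f|²`. -/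
def gradsq {N : ℕ} (f : EuclideanSpace ℝ (Fin N) → ℝ) (x : EuclideanSpace ℝ (Fin N)) : ℝ :=
  ∑ i : Fin N, (pd i f x) ^ 2

/-- A ground-state profile of the quasilinear Schrödinger equation (QLS)
`-Δu - uΔ(u²) + ωu - u^p = 0` on `ℝ^N`: smooth, positive, radially symmetric with a
strictly decreasing positive profile, solves (QLS) pointwise, and decays
exponentially together with all its derivatives. -/
structure IsGroundState (N : ℕ) (ω p : ℝ) (u : EuclideanSpace ℝ (Fin N) → ℝ) : Prop where
  smooth : ContDiff ℝ (⊤ : ℕ∞) u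
  pos : ∀ x, 0 < u x
  radial : ∃ U : ℝ → ℝ, StrictAntiOn U (Set.Ici 0) ∧ (∀ r, 0 ≤ r → 0 < U r) ∧
      ∀ x, u x = U ‖x‖
  solves : ∀ x, -lap u x - u x * lap (fun y => (u y) ^ 2) x + ω * u x - (u x) ^ p = 0
  decay : ∀ k : ℕ, ∃ C > 0, ∃ δ > 0, ∀ x,
      ‖iteratedFDeriv ℝ k u x‖ ≤ C * Real.exp (-δ * ‖x‖)

/-- The linearized operator `L₊` around `u` (real-valued functions). -/
def Lplus {N : ℕ} (ω p : ℝ) (u η : EuclideanSpace ℝ (Fin N) → ℝ)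
    (x : EuclideanSpace ℝ (Fin N)) : ℝ :=
  -lap η x - 2 * u x * lap (fun y => u y * η y) x + ω * η x
    - (lap (fun y => (u y) ^ 2) x + p * u x ^ (p - 1)) * η x

/-- The linearized operator `L₋` around `u`. -/
def Lminus {N : ℕ} (ω p : ℝ) (u ζ : EuclideanSpace ℝ (Fin N) → ℝ)
    (x : EuclideanSpace ℝ (Fin N)) : ℝ :=
  -lap ζ x + ω * ζ x - (lap (fun y => (u y) ^ 2) x + u x ^ (p - 1)) * ζ x


abbrev E2 := EuclideanSpace ℝ (Fin 2)

abbrev ee (i : Fin 2) : E2 := EuclideanSpace.single i 1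

def Dec (δ : ℝ) (f : E2 → ℝ) : Prop :=
  Continuous f ∧ ∃ C, 0 ≤ C ∧ ∀ x, |f x| ≤ C * Real.exp (-δ * ‖x‖)

def Bd (f : E2 → ℝ) : Prop :=
  Continuous f ∧ ∃ C, 0 ≤ C ∧ ∀ x, |f x| ≤ C

lemma Dec.bd {δ : ℝ} (hδ : 0 < δ) {f : E2 → ℝ} (hf : Dec δ f) : Bd f := by
  obtain ⟨h, C, hC, hb⟩ := hf
  refine ⟨h, C, hC, fun x => (hb x).trans ?_⟩
  have : Real.exp (-δ * ‖x‖) ≤ 1 := by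
    rw [Real.exp_le_one_iff]
    nlinarith [norm_nonneg x]
  nlinarith

lemma Bd.mul_dec {δ : ℝ} {f g : E2 → ℝ} (hf : Bd f) (hg : Dec δ g) :
    Dec δ (fun x => f x * g x) := by
  obtain ⟨h, C, hC, hb⟩ := hf
  obtain ⟨h', C', hC', hb'⟩ := hg
  refine ⟨h.mul h', C * C', by positivity, fun x => ?_⟩
  rw [abs_mul, mul_assoc]
  exact mul_le_mul (hb x) (hb' x) (abs_nonneg _) hC

lemma Dec.mul {δ : ℝ} (hδ : 0 < δ) {f g : E2 → ℝ} (hf : Dec δ f) (hg : Dec δ g) :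
    Dec δ (fun x => f x * g x) := (hf.bd hδ).mul_dec hg

lemma bd_const (c : ℝ) : Bd (fun _ => c) := ⟨continuous_const, |c|, abs_nonneg _, fun _ => le_rfl⟩

lemma Dec.const_mul {δ : ℝ} (c : ℝ) {f : E2 → ℝ} (hf : Dec δ f) :
    Dec δ (fun x => c * f x) := (bd_const c).mul_dec hf

lemma Dec.add {δ : ℝ} {f g : E2 → ℝ} (hf : Dec δ f) (hg : Dec δ g) :
    Dec δ (fun x => f x + g x) := by
  obtain ⟨h, C, hC, hb⟩ := hf
  obtain ⟨h', C', hC', hb'⟩ := hg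
  refine ⟨h.add h', C + C', by positivity, fun x => ?_⟩
  rw [add_mul]
  exact (abs_add_le _ _).trans (add_le_add (hb x) (hb' x))

lemma Bd.add {f g : E2 → ℝ} (hf : Bd f) (hg : Bd g) :
    Bd (fun x => f x + g x) := by
  obtain ⟨h, C, hC, hb⟩ := hf
  obtain ⟨h', C', hC', hb'⟩ := hg
  exact ⟨h.add h', C + C', by positivity, fun x =>
    (abs_add_le _ _).trans (add_le_add (hb x) (hb' x))⟩

lemma Dec.sub {δ : ℝ} {f g : E2 → ℝ} (hf : Dec δ f) (hg : Dec δ g) :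
    Dec δ (fun x => f x - g x) := by
  have := hf.add (hg.const_mul (-1))
  convert this using 2
  ring

lemma exp_bd {δ : ℝ} (hδ : 0 < δ) : ∃ K : ℝ, 0 ≤ K ∧ ∀ t : ℝ, 0 ≤ t →
    (1 + t) * Real.exp (-δ * t) ≤ K * (1 + t) ^ (-3 : ℝ) := by
  refine ⟨(1 + 4 / δ) ^ 4, by positivity, fun t ht => ?_⟩
  have h1 : (1 + t) ≤ (1 + 4 / δ) * Real.exp (δ * t / 4) := by
    have := Real.add_one_le_exp (δ * t / 4)
    have h2 : (1 + t) ≤ (1 + 4 / δ) * (δ * t / 4 + 1) := by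
      have : (1 + 4 / δ) * (δ * t / 4 + 1) = 1 + t + 4 / δ + δ * t / 4 := by
        field_simp
        ring
      rw [this]
      have : 0 ≤ 4 / δ + δ * t / 4 := by positivity
      linarith
    exact h2.trans (by gcongr)
  have h3 : (1 + t) ^ 4 ≤ (1 + 4 / δ) ^ 4 * Real.exp (δ * t) := by
    have := pow_le_pow_left₀ (by positivity) h1 4
    rw [mul_pow, ← Real.exp_nat_mul] at this
    have e : ((4 : ℕ) : ℝ) * (δ * t / 4) = δ * t := by
      push_cast
      ring
    rwa [e] at this
  have h4 : (1 + t) ^ (-3 : ℝ) = ((1 + t) ^ 3)⁻¹ := by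
    rw [Real.rpow_neg (by positivity)]
    norm_cast
  rw [h4, neg_mul, Real.exp_neg, ← div_eq_mul_inv, ← div_eq_mul_inv,
    div_le_div_iff₀ (by positivity) (by positivity)]
  calc _ = (1 + t) ^ 4 := by ring
    _ ≤ _ := h3

lemma integ_aux {δ : ℝ} (hδ : 0 < δ) {f g : E2 → ℝ} (hf : Dec δ f) (hg : Continuous g)
    (hgb : ∀ x, |g x| ≤ 1 + ‖x‖) : Integrable (fun x => g x * f x) := by
  obtain ⟨h, C, hC, hb⟩ := hf
  obtain ⟨K, hK, hKb⟩ := exp_bd hδ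
  have hi : Integrable (fun x : E2 => (1 + ‖x‖) ^ (-3 : ℝ)) :=
    integrable_one_add_norm (by simp; norm_num)
  refine (hi.const_mul (C * K)).mono' (hg.mul h).aestronglyMeasurable
    (Eventually.of_forall fun x => ?_)
  rw [Real.norm_eq_abs, abs_mul]
  calc |g x| * |f x| ≤ (1 + ‖x‖) * (C * Real.exp (-δ * ‖x‖)) :=
        mul_le_mul (hgb x) (hb x) (abs_nonneg _) (by positivity)
    _ = C * ((1 + ‖x‖) * Real.exp (-δ * ‖x‖)) := by ring
    _ ≤ C * (K * (1 + ‖x‖) ^ (-3 : ℝ)) := by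
        exact mul_le_mul_of_nonneg_left (hKb ‖x‖ (norm_nonneg x)) hC
    _ = _ := by ring

lemma Dec.integrable {δ : ℝ} (hδ : 0 < δ) {f : E2 → ℝ} (hf : Dec δ f) : Integrable f := by
  have := integ_aux hδ hf (g := fun _ => 1) continuous_const
    (fun x => by simp [norm_nonneg (x : E2)])
  simpa using this

lemma Dec.integrable_coord {δ : ℝ} (hδ : 0 < δ) {f : E2 → ℝ} (hf : Dec δ f) (j : Fin 2) :
    Integrable (fun x : E2 => x j * f x) := by
  refine integ_aux hδ hf (g := fun x => x j) (by fun_prop) (fun x => ?_)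
  have := PiLp.norm_apply_le x j
  rw [Real.norm_eq_abs] at this
  linarith

lemma ibp {δ : ℝ} (hδ : 0 < δ) {T T' : E2 → ℝ} (hT : Dec δ T) (hT' : Dec δ T') (i j : Fin 2)
    (h : ∀ x, HasLineDerivAt ℝ T (T' x) x (ee i)) :
    ∫ x : E2, x j * T' x = - ((if j = i then 1 else 0) * ∫ x, T x) := by
  have := integral_bilinear_hasLineDerivAt_right_eq_neg_left_of_integrable
    (μ := (volume : Measure E2)) (B := ContinuousLinearMap.mul ℝ ℝ)
    (f := fun x : E2 => x j) (f' := fun _ => if j = i then 1 else 0) (g := T) (g' := T')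
    (v := ee i) ?_ ?_ ?_ ?_ ?_
  · simp only [ContinuousLinearMap.mul_apply'] at this
    rw [this, integral_const_mul]
  · simp only [ContinuousLinearMap.mul_apply']
    exact (hT.integrable hδ).const_mul _
  · exact hT'.integrable_coord hδ j
  · exact hT.integrable_coord hδ j
  · intro x _
    unfold HasLineDerivAt
    have : HasDerivAt (fun t : ℝ => x j + t * (if j = i then 1 else 0))
        (1 * (if j = i then 1 else 0)) 0 :=
      ((hasDerivAt_id (0 : ℝ)).mul_const _).const_add _
    simpa [ee, Pi.single_apply] using this
  · intro x _
    exact h x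

lemma ld_mul {f g : E2 → ℝ} {f' g' : ℝ} {x v : E2} (hf : HasLineDerivAt ℝ f f' x v)
    (hg : HasLineDerivAt ℝ g g' x v) :
    HasLineDerivAt ℝ (fun x => f x * g x) (f' * g x + f x * g') x v := by
  unfold HasLineDerivAt at *
  simpa using HasDerivAt.fun_mul hf hg

lemma ld_add {f g : E2 → ℝ} {f' g' : ℝ} {x v : E2} (hf : HasLineDerivAt ℝ f f' x v)
    (hg : HasLineDerivAt ℝ g g' x v) :
    HasLineDerivAt ℝ (fun x => f x + g x) (f' + g') x v :=
  HasDerivAt.fun_add hf hg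

lemma ld_sub {f g : E2 → ℝ} {f' g' : ℝ} {x v : E2} (hf : HasLineDerivAt ℝ f f' x v)
    (hg : HasLineDerivAt ℝ g g' x v) :
    HasLineDerivAt ℝ (fun x => f x - g x) (f' - g') x v :=
  HasDerivAt.fun_sub hf hg

lemma ld_const_mul (c : ℝ) {f : E2 → ℝ} {f' : ℝ} {x v : E2} (hf : HasLineDerivAt ℝ f f' x v) :
    HasLineDerivAt ℝ (fun x => c * f x) (c * f') x v :=
  HasDerivAt.const_mul c hf

lemma ld_const_add (c : ℝ) {f : E2 → ℝ} {f' : ℝ} {x v : E2} (hf : HasLineDerivAt ℝ f f' x v) :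
    HasLineDerivAt ℝ (fun x => c + f x) f' x v :=
  HasDerivAt.const_add c hf

lemma ld_rpow (q : ℝ) {f : E2 → ℝ} {f' : ℝ} {x v : E2} (hf : HasLineDerivAt ℝ f f' x v)
    (hx : 0 < f x) :
    HasLineDerivAt ℝ (fun x => f x ^ q) (f' * q * f x ^ (q - 1)) x v := by
  unfold HasLineDerivAt at *
  simpa using HasDerivAt.rpow_const (p := q) hf (Or.inl (by simpa using hx.ne'))

lemma pd_smooth {u : E2 → ℝ} (hu : ContDiff ℝ (⊤ : ℕ∞) u) (i : Fin 2) :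
    ContDiff ℝ (⊤ : ℕ∞) (pd i u) := by
  unfold pd
  exact (hu.fderiv_right (m := ((⊤ : ℕ∞) : WithTop ℕ∞)) (by simp)).clm_apply contDiff_const

lemma pd_ld {u : E2 → ℝ} (hu : ContDiff ℝ (⊤ : ℕ∞) u) (i : Fin 2) (x : E2) :
    HasLineDerivAt ℝ u (pd i u x) x (ee i) :=
  ((hu.differentiable (by simp)) x).hasFDerivAt.hasLineDerivAt _

lemma pd_eq {f : E2 → ℝ} (hf : ContDiff ℝ (⊤ : ℕ∞) f) {i : Fin 2} {x : E2} {c : ℝ}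
    (h : HasLineDerivAt ℝ f c x (ee i)) : pd i f x = c :=
  (pd_ld hf i x).unique h

lemma pd_pd {u : E2 → ℝ} (hu : ContDiff ℝ (⊤ : ℕ∞) u) (i j : Fin 2) (x : E2) :
    pd i (pd j u) x = fderiv ℝ (fderiv ℝ u) x (ee i) (ee j) := by
  have h : DifferentiableAt ℝ (fderiv ℝ u) x :=
    ((hu.fderiv_right (m := ((⊤ : ℕ∞) : WithTop ℕ∞)) (by simp)).differentiable (by simp)) x
  have := (h.hasFDerivAt.clm_apply (hasFDerivAt_const (ee j) x)).fderiv
  unfold pd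
  rw [this]
  simp

lemma pd_comm {u : E2 → ℝ} (hu : ContDiff ℝ (⊤ : ℕ∞) u) (i j : Fin 2) (x : E2) :
    pd i (pd j u) x = pd j (pd i u) x := by
  rw [pd_pd hu, pd_pd hu]
  have : IsSymmSndFDerivAt ℝ u x := (hu.contDiffAt).isSymmSndFDerivAt
    (by simpa using (WithTop.coe_le_coe.2 (le_top : (2 : ℕ∞) ≤ ⊤)))
  exact this.eq _ _

lemma lap_sq {u : E2 → ℝ} (hu : ContDiff ℝ (⊤ : ℕ∞) u) (x : E2) :
    lap (fun y => u y ^ 2) x = 2 * u x * lap u x + 2 * (pd 0 u x ^ 2 + pd 1 u x ^ 2) := by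
  have h2 : ∀ i, pd i (fun y => u y ^ 2) = fun y => 2 * (u y * pd i u y) := by
    intro i
    funext y
    apply pd_eq (hu.pow 2)
    have := ld_mul (pd_ld hu i y) (pd_ld hu i y)
    convert this using 1
    · funext z; ring
    · ring
  have h3 : ∀ i, pd i (pd i (fun y => u y ^ 2)) x =
      2 * (pd i u x * pd i u x + u x * pd i (pd i u) x) := by
    intro i
    rw [h2]
    exact pd_eq (contDiff_const.mul (hu.mul (pd_smooth hu i)))
      (ld_const_mul 2 (ld_mul (pd_ld hu i x) (pd_ld (pd_smooth hu i) i x)))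
  simp only [lap, Fin.sum_univ_two, h3]
  ring

/-- Pohozaev-type identity in dimension 2: `ω ∫ u² = (2/(p+1)) ∫ u^{p+1}`. -/
theorem stmt13 (ω p : ℝ) (hω : 0 < ω) (hp : 1 < p)
    (u : EuclideanSpace ℝ (Fin 2) → ℝ) (hsm : ContDiff ℝ (⊤ : ℕ∞) u) (hpos : ∀ x, 0 < u x)
    (hsol : ∀ x, -lap u x - u x * lap (fun y => (u y) ^ 2) x + ω * u x - (u x) ^ p = 0)
    (hdec : ∃ C > 0, ∃ δ > 0, ∀ k : ℕ, k ≤ 2 → ∀ x,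
      ‖iteratedFDeriv ℝ k u x‖ ≤ C * Real.exp (-δ * ‖x‖)) :
    ω * ∫ x, (u x) ^ 2 = (2 / (p + 1)) * ∫ x, u x ^ (p + 1) := by
  obtain ⟨C, hC, δ, hδ, hd⟩ := hdec
  have du : Dec δ u := by
    refine ⟨hsm.continuous, C, hC.le, fun x => ?_⟩
    have := hd 0 (by norm_num) x
    rwa [norm_iteratedFDeriv_zero, Real.norm_eq_abs] at this
  have dp : ∀ i, Dec δ (pd i u) := by
    intro i
    refine ⟨(pd_smooth hsm i).continuous, C, hC.le, fun x => ?_⟩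
    have := hd 1 (by norm_num) x
    rw [norm_iteratedFDeriv_one] at this
    refine le_trans ?_ this
    have h := (fderiv ℝ u x).le_opNorm (ee i)
    simpa [ee, pd] using h
  have dpp : ∀ i j, Dec δ (pd i (pd j u)) := by
    intro i j
    refine ⟨(pd_smooth (pd_smooth hsm j) i).continuous, C, hC.le, fun x => ?_⟩
    have := hd 2 (by norm_num) x
    refine le_trans ?_ this
    have h := (iteratedFDeriv ℝ 2 u x).le_opNorm ![ee i, ee j]
    rw [iteratedFDeriv_two_apply] at h
    rw [pd_pd hsm]
    simpa [ee] using h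
  have hup : Bd (fun x => u x ^ p) := by
    refine ⟨hsm.continuous.rpow_const (fun x => Or.inl (hpos x).ne'), ?_⟩
    obtain ⟨-, K, hK, hb⟩ := du.bd hδ
    refine ⟨K ^ p, by positivity, fun x => ?_⟩
    rw [abs_of_nonneg (Real.rpow_nonneg (hpos x).le p)]
    exact Real.rpow_le_rpow (hpos x).le ((le_abs_self _).trans (hb x)) (by linarith)
  have hq : ∀ x, u x ^ (p + 1) = u x ^ p * u x := fun x => Real.rpow_add_one (hpos x).ne' p
  have dq : Dec δ (fun x => u x ^ (p + 1)) := by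
    simp only [hq]
    exact hup.mul_dec du
  have hp1 : p + 1 ≠ 0 := by linarith
  set w : E2 → ℝ := fun x => 1 + 2 * (u x * u x) with hw
  have bw : Bd w := (bd_const 1).add (((du.mul hδ du).const_mul 2).bd hδ)
  have lw : ∀ i x, HasLineDerivAt ℝ w (2 * (pd i u x * u x + u x * pd i u x)) x (ee i) :=
    fun i x => ld_const_add 1 (ld_const_mul 2 (ld_mul (pd_ld hsm i x) (pd_ld hsm i x)))
  -- potential
  set F : E2 → ℝ := fun x => ω / 2 * (u x * u x) - 1 / (p + 1) * u x ^ (p + 1) with hF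
  have dF : Dec δ F := ((du.mul hδ du).const_mul _).sub (dq.const_mul _)
  have lF : ∀ i x, HasLineDerivAt ℝ F ((ω * u x - u x ^ p) * pd i u x) x (ee i) := by
    intro i x
    have := ld_sub (ld_const_mul (ω / 2) (ld_mul (pd_ld hsm i x) (pd_ld hsm i x)))
      (ld_const_mul (1 / (p + 1)) (ld_rpow (p + 1) (pd_ld hsm i x) (hpos x)))
    convert this using 1
    rw [add_sub_cancel_right]
    field_simp
    ring
  have dF' : ∀ i, Dec δ (fun x => (ω * u x - u x ^ p) * pd i u x) := by
    intro i
    have h1 := ((du.const_mul ω).mul hδ (dp i)).sub (hup.mul_dec (dp i))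
    convert h1 using 2
    ring
  -- products of first derivatives
  have dP : ∀ i j, Dec δ (fun x => w x * (pd i u x * pd j u x)) := fun i j =>
    bw.mul_dec ((dp i).mul hδ (dp j))
  have lP : ∀ k i j x, HasLineDerivAt ℝ (fun x => w x * (pd i u x * pd j u x))
      (2 * (pd k u x * u x + u x * pd k u x) * (pd i u x * pd j u x) +
        w x * (pd k (pd i u) x * pd j u x + pd i u x * pd k (pd j u) x)) x (ee k) :=
    fun k i j x => ld_mul (lw k x)
      (ld_mul (pd_ld (pd_smooth hsm i) k x) (pd_ld (pd_smooth hsm j) k x))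
  have dP' : ∀ k i j, Dec δ (fun x => 
      2 * (pd k u x * u x + u x * pd k u x) * (pd i u x * pd j u x) +
        w x * (pd k (pd i u) x * pd j u x + pd i u x * pd k (pd j u) x)) :=
    fun k i j => ((((((dp k).mul hδ du).add (du.mul hδ (dp k))).const_mul 2).mul hδ
      ((dp i).mul hδ (dp j)))).add (bw.mul_dec
        (((dpp k i).mul hδ (dp j)).add ((dp i).mul hδ (dpp k j))))
  -- stress tensor
  have dD : ∀ i j, Dec δ (fun x => 1 / 2 * (w x * (pd i u x * pd i u x) -
      w x * (pd j u x * pd j u x)) - F x) := fun i j =>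
    (((dP i i).sub (dP j j)).const_mul _).sub dF
  have I00 := ibp hδ (dD 0 1) ((((dP' 0 0 0).sub (dP' 0 1 1)).const_mul (1 / 2)).sub (dF' 0)) 0 0
    (fun x => ld_sub (ld_const_mul _ (ld_sub (lP 0 0 0 x) (lP 0 1 1 x))) (lF 0 x))
  have I11 := ibp hδ (dD 1 0) ((((dP' 1 1 1).sub (dP' 1 0 0)).const_mul (1 / 2)).sub (dF' 1)) 1 1
    (fun x => ld_sub (ld_const_mul _ (ld_sub (lP 1 1 1 x) (lP 1 0 0 x))) (lF 1 x))
  have I10 := ibp hδ (dP 0 1) (dP' 1 0 1) 1 0 (lP 1 0 1)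
  have I01 := ibp hδ (dP 0 1) (dP' 0 0 1) 0 1 (lP 0 0 1)
  have J00 := ((((dP' 0 0 0).sub (dP' 0 1 1)).const_mul (1 / 2)).sub (dF' 0)).integrable_coord hδ 0
  have J11 := ((((dP' 1 1 1).sub (dP' 1 0 0)).const_mul (1 / 2)).sub (dF' 1)).integrable_coord hδ 1
  have J10 := (dP' 1 0 1).integrable_coord hδ 0
  have J01 := (dP' 0 0 1).integrable_coord hδ 1
  have K0 := integral_add J00 J10
  have K1 := integral_add J11 J01
  have eqn : ∀ x, w x * (pd 0 (pd 0 u) x + pd 1 (pd 1 u) x)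
      + 2 * u x * (pd 0 u x ^ 2 + pd 1 u x ^ 2) = ω * u x - u x ^ p := by
    intro x
    have := hsol x
    rw [lap_sq hsm] at this
    simp only [lap, Fin.sum_univ_two] at this
    simp only [hw]
    linarith
  have Z0 : (0 : ℝ) = _ := Eq.trans ?_ K0
  · have Z1 : (0 : ℝ) = _ := Eq.trans ?_ K1
    · rw [I00, I10] at Z0
      rw [I11, I01] at Z1
      have S := integral_add ((dD 0 1).integrable hδ) ((dD 1 0).integrable hδ)
      have S2 : ∫ x, F x = 0 := by
        have : ∫ x, (-2) * F x = 0 := by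
          have e : (fun x => (-2) * F x) = fun x => (1 / 2 * (w x * (pd 0 u x * pd 0 u x) -
            w x * (pd 1 u x * pd 1 u x)) - F x) + (1 / 2 * (w x * (pd 1 u x * pd 1 u x) -
            w x * (pd 0 u x * pd 0 u x)) - F x) := by
            funext x; ring
          rw [e, S]
          simp only [if_true, one_mul, zero_ne_one, one_ne_zero, if_false, zero_mul] at Z0 Z1
          linarith
        rw [integral_const_mul] at this
        linarith
      have S3 := integral_sub (((du.mul hδ du).integrable hδ).const_mul (ω / 2))
        ((dq.integrable hδ).const_mul (1 / (p + 1)))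
      rw [integral_const_mul, integral_const_mul] at S3
      have S4 := S3.symm.trans S2
      simp only [pow_two]
      have : 2 / (p + 1) = 2 * (1 / (p + 1)) := by ring
      rw [this]
      linarith
    · symm
      rw [← integral_zero E2 ℝ (μ := volume)]
      congr 1
      funext x
      rw [pd_comm hsm 1 0]
      linear_combination (x 1 * pd 1 u x) * eqn x
  · symm
    rw [← integral_zero E2 ℝ (μ := volume)]
    congr 1
    funext x
    rw [pd_comm hsm 1 0]
    linear_combination (x 0 * pd 0 u x) * eqn x

end
end

section
/- Let N ≥ 1 be an integer, ω > 0 and p > 1. Let u : ℝ^N → ℝ be a smooth positive function solving (QLS) pointwise on ℝ^N, and assume u and all its partial derivatives up to order two decay exponentially: there exist C, δ > 0 with |∂^α u(x)| ≤ C e^{−δ|x|} for every multi-index α with |α| ≤ 2 and every x ∈ ℝ^N. Then ∫_{ℝ^N} (L₊u)(x)·u(x) dx = 8∫_{ℝ^N} u²|∇u|² dx − (p−1)∫_{ℝ^N} u^{p+1} dx. -/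
open MeasureTheory Real Filter Topology

noncomputable section

lemma integrable_exp_aux {N : ℕ} {δ : ℝ} (hδ : 0 < δ) :
    Integrable (fun x : EuclideanSpace ℝ (Fin N) => Real.exp (-δ * ‖x‖)) := by
  have h := (integrable_one_add_norm (E := EuclideanSpace ℝ (Fin N)) (μ := volume)
    (r := ((N + 1 : ℕ) : ℝ)) (by simp)).const_mul
      (Real.exp δ * ((N + 1).factorial : ℝ) / δ ^ (N + 1))
  refine h.mono' (by fun_prop) (Eventually.of_forall fun x => ?_)
  have h0 : 0 < 1 + ‖x‖ := by positivity
  have h1 := Real.pow_div_factorial_le_exp (δ * (1 + ‖x‖)) (by positivity) (N + 1)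
  rw [Real.norm_eq_abs, abs_of_pos (Real.exp_pos _), Real.rpow_neg h0.le, Real.rpow_natCast]
  have h2 : Real.exp (-δ * ‖x‖) = Real.exp δ / Real.exp (δ * (1 + ‖x‖)) := by
    rw [← Real.exp_sub]; congr 1; ring
  rw [h2, div_le_iff₀ (Real.exp_pos _)]
  have hf : (0 : ℝ) < ((N + 1).factorial : ℝ) := by positivity
  have h3 : Real.exp δ = Real.exp δ * ((N + 1).factorial : ℝ) / δ ^ (N + 1)
      * ((1 + ‖x‖) ^ (N + 1))⁻¹ * ((δ * (1 + ‖x‖)) ^ (N + 1) / ((N + 1).factorial : ℝ)) := by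
    rw [mul_pow]; field_simp
  calc Real.exp δ = _ := h3
    _ ≤ _ := by gcongr

lemma pd_sq {N : ℕ} (i : Fin N) {u : EuclideanSpace ℝ (Fin N) → ℝ}
    (hu : ContDiff ℝ (⊤ : ℕ∞) u) :
    pd i (fun y => (u y) ^ 2) = fun x => 2 * (u x * pd i u x) := by
  have hd : Differentiable ℝ u := hu.differentiable (by simp)
  funext x
  simp only [pd]
  rw [((hd x).hasFDerivAt.pow 2).fderiv]
  simp
  ring

lemma contDiff_pd {N : ℕ} (i : Fin N) {u : EuclideanSpace ℝ (Fin N) → ℝ}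
    (hu : ContDiff ℝ (⊤ : ℕ∞) u) : ContDiff ℝ (⊤ : ℕ∞) (pd i u) := by
  have h : ContDiff ℝ (⊤ : ℕ∞) (fderiv ℝ u) := hu.fderiv_right (by simp)
  exact h.clm_apply contDiff_const

lemma pd_pd_sq {N : ℕ} (i : Fin N) {u : EuclideanSpace ℝ (Fin N) → ℝ}
    (hu : ContDiff ℝ (⊤ : ℕ∞) u) :
    pd i (pd i (fun y => (u y) ^ 2)) =
      fun x => 2 * (u x * pd i (pd i u) x + pd i u x * pd i u x) := by
  have hd : Differentiable ℝ u := hu.differentiable (by simp)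
  have hd' : Differentiable ℝ (pd i u) := (contDiff_pd i hu).differentiable (by simp)
  rw [pd_sq i hu]
  funext x
  change fderiv ℝ (fun y => 2 * (u * pd i u) y) x _ = _
  rw [(((hd x).hasFDerivAt.mul (hd' x).hasFDerivAt).const_mul 2).fderiv]
  simp [pd]
  ring

lemma pd_pd_eq {N : ℕ} (i : Fin N) {u : EuclideanSpace ℝ (Fin N) → ℝ}
    (hu : ContDiff ℝ (⊤ : ℕ∞) u) (x : EuclideanSpace ℝ (Fin N)) :
    pd i (pd i u) x =
      iteratedFDeriv ℝ 2 u x ![EuclideanSpace.single i 1, EuclideanSpace.single i 1] := by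
  have h : ContDiff ℝ (⊤ : ℕ∞) (fderiv ℝ u) := hu.fderiv_right (by simp)
  have hd : DifferentiableAt ℝ (fderiv ℝ u) x := h.differentiable (by simp) x
  rw [iteratedFDeriv_two_apply]
  show fderiv ℝ (fun y => fderiv ℝ u y (EuclideanSpace.single i 1)) x _ = _
  rw [fderiv_clm_apply hd (differentiableAt_const _)]
  simp

lemma integral_part {N : ℕ} {u : EuclideanSpace ℝ (Fin N) → ℝ}
    (hu : ContDiff ℝ (⊤ : ℕ∞) u)
    {C δ : ℝ} (hC : 0 < C) (hδ : 0 < δ)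
    (hdec : ∀ k : ℕ, k ≤ 2 → ∀ x, ‖iteratedFDeriv ℝ k u x‖ ≤ C * Real.exp (-δ * ‖x‖))
    (i : Fin N) :
    Integrable (fun x => (u x) ^ 2 * (pd i u x) ^ 2) ∧
    Integrable (fun x => (u x) ^ 2 * pd i (pd i (fun y => (u y) ^ 2)) x) ∧
    ∫ x, (u x) ^ 2 * pd i (pd i (fun y => (u y) ^ 2)) x
      = - (4 * ∫ x, (u x) ^ 2 * (pd i u x) ^ 2) := by
  have hd : Differentiable ℝ u := hu.differentiable (by simp)
  have hd' : Differentiable ℝ (pd i u) := (contDiff_pd i hu).differentiable (by simp)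
  have c0 : Continuous u := hu.continuous
  have c1 : Continuous (pd i u) := (contDiff_pd i hu).continuous
  have c2 : Continuous (pd i (pd i u)) := (contDiff_pd i (contDiff_pd i hu)).continuous
  have he1 : ∀ x : EuclideanSpace ℝ (Fin N), C * Real.exp (-δ * ‖x‖) ≤ C := fun x => by
    have : Real.exp (-δ * ‖x‖) ≤ 1 := Real.exp_le_one_iff.2 (by
      have := mul_nonneg hδ.le (norm_nonneg x); linarith)
    nlinarith
  have b0 : ∀ x, ‖u x‖ ≤ C * Real.exp (-δ * ‖x‖) := fun x => by
    simpa using hdec 0 (by norm_num) x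
  have b0' : ∀ x, ‖u x‖ ≤ C := fun x => (b0 x).trans (he1 x)
  have b1 : ∀ x, ‖pd i u x‖ ≤ C := fun x => by
    have h := (hdec 1 (by norm_num) x).trans (he1 x)
    rw [norm_iteratedFDeriv_one] at h
    refine ((fderiv ℝ u x).le_opNorm _).trans ?_
    simpa using h
  have b2 : ∀ x, ‖pd i (pd i u) x‖ ≤ C := fun x => by
    have h := (hdec 2 le_rfl x).trans (he1 x)
    rw [pd_pd_eq i hu]
    refine (ContinuousMultilinearMap.le_opNorm _ _).trans ?_
    simpa [Fin.prod_univ_two] using h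
  have I0 : Integrable u :=
    ((integrable_exp_aux hδ).const_mul C).mono' c0.aestronglyMeasurable (Eventually.of_forall b0)
  have key : ∀ g : EuclideanSpace ℝ (Fin N) → ℝ, Continuous g → (∃ K, ∀ x, ‖g x‖ ≤ K) →
      Integrable (fun x => g x * u x) := by
    rintro g cg ⟨K, hK⟩
    exact I0.bdd_mul cg.aestronglyMeasurable (Eventually.of_forall hK)
  have J1 : Integrable (fun x => (u x) ^ 2 * (pd i u x) ^ 2) := by
    have := key (fun x => u x * (pd i u x * pd i u x)) (by fun_prop) ⟨C * (C * C), fun x => by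
      rw [norm_mul, norm_mul]; gcongr <;> first | exact b0' x | exact b1 x⟩
    refine this.congr (Eventually.of_forall fun x => ?_)
    simp only; ring
  have J3 : Integrable (fun x => (u x) ^ 2 * (u x * pd i (pd i u) x)) := by
    have := key (fun x => u x * (u x * pd i (pd i u) x)) (by fun_prop) ⟨C * (C * C), fun x => by
      rw [norm_mul, norm_mul]; gcongr <;> first | exact b0' x | exact b2 x⟩
    refine this.congr (Eventually.of_forall fun x => ?_)
    simp only; ring
  have J4 : Integrable (fun x => (u x) ^ 2 * (u x * pd i u x)) := by
    have := key (fun x => u x * (u x * pd i u x)) (by fun_prop) ⟨C * (C * C), fun x => by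
      rw [norm_mul, norm_mul]; gcongr <;> first | exact b0' x | exact b1 x⟩
    refine this.congr (Eventually.of_forall fun x => ?_)
    simp only; ring
  have J2 : Integrable (fun x => (u x) ^ 2 * pd i (pd i (fun y => (u y) ^ 2)) x) := by
    rw [pd_pd_sq i hu]
    refine ((J3.add J1).const_mul 2).congr (Eventually.of_forall fun x => ?_)
    simp only [Pi.add_apply]; ring
  refine ⟨J1, J2, ?_⟩
  have e1 : ∀ x, fderiv ℝ (fun y => (u y) ^ 2) x (EuclideanSpace.single i 1)
      = 2 * (u x * pd i u x) := fun x => congrFun (pd_sq i hu) x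
  have P := integral_mul_fderiv_eq_neg_fderiv_mul_of_integrable (μ := volume)
    (f := fun y => (u y) ^ 2) (g := pd i (fun y => (u y) ^ 2))
    (v := EuclideanSpace.single i (1 : ℝ)) ?_ J2 ?_ ?_ ?_
  · refine P.trans ?_
    rw [← integral_const_mul]
    congr 2
    funext x
    rw [e1, pd_sq i hu]; ring
  · refine (J1.const_mul 4).congr (Eventually.of_forall fun x => ?_)
    simp only [e1, pd_sq i hu]; ring
  · refine (J4.const_mul 2).congr (Eventually.of_forall fun x => ?_)
    simp only [pd_sq i hu]; ring
  · intro x _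
    exact (hd x).pow 2
  · intro x _
    rw [pd_sq i hu]
    exact ((hd x).mul (hd' x)).const_mul 2

/-- The quadratic form of `L₊` at `u`: `∫ (L₊u)·u = 8 ∫ u²|∇u|² − (p−1) ∫ u^{p+1}`. -/
theorem stmt15 (N : ℕ) (hN : 1 ≤ N) (ω p : ℝ) (hω : 0 < ω) (hp : 1 < p)
    (u : EuclideanSpace ℝ (Fin N) → ℝ) (hsm : ContDiff ℝ (⊤ : ℕ∞) u) (hpos : ∀ x, 0 < u x)
    (hsol : ∀ x, -lap u x - u x * lap (fun y => (u y) ^ 2) x + ω * u x - (u x) ^ p = 0)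
    (hdec : ∃ C > 0, ∃ δ > 0, ∀ k : ℕ, k ≤ 2 → ∀ x,
      ‖iteratedFDeriv ℝ k u x‖ ≤ C * Real.exp (-δ * ‖x‖)) :
    (∫ x, Lplus ω p u u x * u x)
      = 8 * (∫ x, (u x) ^ 2 * gradsq u x) - (p - 1) * ∫ x, u x ^ (p + 1) := by
  obtain ⟨C, hC, δ, hδ, hdec⟩ := hdec
  have H := integral_part hsm hC hδ hdec
  have c0 : Continuous u := hsm.continuous
  have b0 : ∀ x, ‖u x‖ ≤ C * Real.exp (-δ * ‖x‖) := fun x => by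
    simpa using hdec 0 (by norm_num) x
  have I0 : Integrable u :=
    ((integrable_exp_aux hδ).const_mul C).mono' c0.aestronglyMeasurable (Eventually.of_forall b0)
  have b0' : ∀ x, u x ≤ C := fun x => by
    have h1 : Real.exp (-δ * ‖x‖) ≤ 1 := Real.exp_le_one_iff.2 (by
      have := mul_nonneg hδ.le (norm_nonneg x); linarith)
    have h2 := (le_abs_self _).trans (b0 x)
    nlinarith
  have Ip : Integrable (fun x => u x ^ (p + 1)) := by
    have h : Integrable (fun x => u x ^ p * u x) := by
      refine I0.bdd_mul (c := C ^ p)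
        (c0.rpow_const fun x => Or.inl (hpos x).ne').aestronglyMeasurable
        (Eventually.of_forall fun x => ?_)
      rw [Real.norm_eq_abs, abs_of_pos (Real.rpow_pos_of_pos (hpos x) _)]
      exact Real.rpow_le_rpow (hpos x).le (b0' x) (by linarith)
    refine h.congr (Eventually.of_forall fun x => ?_)
    simp only
    rw [Real.rpow_add (hpos x), Real.rpow_one]
  have point : ∀ x, Lplus ω p u u x * u x =
      (∑ i, -2 * ((u x) ^ 2 * pd i (pd i (fun y => (u y) ^ 2)) x)) - (p - 1) * u x ^ (p + 1) := by
    intro x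
    have hs := hsol x
    have hm : (fun y => u y * u y) = fun y => (u y) ^ 2 := by funext y; ring
    have r1 : u x ^ (p + 1) = u x ^ p * u x := by rw [Real.rpow_add (hpos x), Real.rpow_one]
    have r2 : u x ^ p = u x ^ (p - 1) * u x := by
      rw [Real.rpow_sub_one (hpos x).ne']; field_simp [(hpos x).ne']
    rw [← Finset.mul_sum, ← Finset.mul_sum]
    change _ = -2 * ((u x) ^ 2 * lap (fun y => (u y) ^ 2) x) - _
    unfold Lplus
    rw [hm, r1]
    rw [r2] at hs ⊢
    linear_combination (u x) * hs
  have g : ∫ x, (u x) ^ 2 * gradsq u x = ∑ i, ∫ x, (u x) ^ 2 * (pd i u x) ^ 2 := by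
    rw [← integral_finsetSum _ fun i _ => (H i).1]
    simp only [gradsq, Finset.mul_sum]
  simp only [point]
  rw [integral_sub (integrable_finsetSum _ fun i _ => ((H i).2.1).const_mul _)
    (Ip.const_mul _), integral_const_mul, integral_finsetSum _ fun i _ => ((H i).2.1).const_mul _,
    g, Finset.mul_sum]
  congr 1
  refine Finset.sum_congr rfl fun i _ => ?_
  rw [integral_const_mul, (H i).2.2]
  ring

end
end

section
/- Let N ≥ 3 be an integer and let p be a real number with 1 < p ≤ (3N+2)/(N−2). If u : ℝ^N → ℝ is a smooth function such that ∫_{ℝ^N} u² dx, ∫_{ℝ^N} |∇u|² dx and ∫_{ℝ^N} u²|∇u|² dx are all finite, then ∫_{ℝ^N} |u|^{p+1} dx is finite. -/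
open MeasureTheory Real Filter Topology

noncomputable section

lemma norm_fderiv_le_gradsq {N : ℕ} (u : EuclideanSpace ℝ (Fin N) → ℝ)
    (x : EuclideanSpace ℝ (Fin N)) : ‖fderiv ℝ u x‖ ≤ √(gradsq u x) := by
  refine ContinuousLinearMap.opNorm_le_bound _ (Real.sqrt_nonneg _) fun y => ?_
  have hy : y = ∑ i, y i • EuclideanSpace.single i (1 : ℝ) := by
    have := (EuclideanSpace.basisFun (Fin N) ℝ).sum_repr y
    simpa using this.symm
  have h : fderiv ℝ u x y = ∑ i, pd i u x * y i := by
    conv_lhs => rw [hy]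
    rw [map_sum]
    refine Finset.sum_congr rfl fun i _ => ?_
    rw [map_smul, smul_eq_mul, mul_comm]
    rfl
  rw [h, EuclideanSpace.norm_eq, Real.norm_eq_abs]
  refine abs_le.2 ⟨?_, ?_⟩
  · have := Real.sum_mul_le_sqrt_mul_sqrt Finset.univ (fun i => pd i u x) (fun i => - y i)
    simp only [mul_neg, Finset.sum_neg_distrib, neg_sq] at this
    simp only [gradsq, Real.norm_eq_abs, sq_abs]
    linarith
  · have := Real.sum_mul_le_sqrt_mul_sqrt Finset.univ (fun i => pd i u x) (fun i => y i)
    simpa only [gradsq, Real.norm_eq_abs, sq_abs] using this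

/-- smooth cutoffs -/
lemma exists_cutoff (N : ℕ) : ∃ (χ : ℕ → EuclideanSpace ℝ (Fin N) → ℝ) (K : ℝ), 0 ≤ K ∧
    (∀ n, ContDiff ℝ 1 (χ n)) ∧ (∀ n, HasCompactSupport (χ n)) ∧
    (∀ n x, |χ n x| ≤ 1) ∧ (∀ n x, ‖fderiv ℝ (χ n) x‖ ≤ K / (n + 1)) ∧
    (∀ x, Tendsto (fun n => χ n x) atTop (𝓝 1)) := by
  let b : ContDiffBump (0 : EuclideanSpace ℝ (Fin N)) := ⟨1, 2, by norm_num, by norm_num⟩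
  have hb : ContDiff ℝ 1 b := b.contDiff
  have hcs : HasCompactSupport b := b.hasCompactSupport
  obtain ⟨K, hK⟩ := (hcs.fderiv (𝕜 := ℝ)).exists_bound_of_continuous
    (hb.continuous_fderiv one_ne_zero)
  have hn0 : ∀ n : ℕ, ((n : ℝ) + 1) ≠ 0 := fun n => by positivity
  refine ⟨fun n x => b (((n : ℝ) + 1)⁻¹ • x), K, (norm_nonneg _).trans (hK 0), ?_, ?_, ?_, ?_, ?_⟩
  · intro n
    exact hb.comp (contDiff_const_smul _)
  · intro n
    exact hcs.comp_smul (inv_ne_zero (hn0 n))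
  · intro n x
    rw [abs_of_nonneg b.nonneg]
    exact b.le_one
  · intro n x
    have hd : HasFDerivAt (fun x => b (((n : ℝ) + 1)⁻¹ • x))
        ((fderiv ℝ b (((n : ℝ) + 1)⁻¹ • x)).comp
          (((n : ℝ) + 1)⁻¹ • ContinuousLinearMap.id ℝ (EuclideanSpace ℝ (Fin N)))) x :=
      ((hb.differentiable one_ne_zero _).hasFDerivAt).comp x
        ((hasFDerivAt_id x).const_smul (((n : ℝ) + 1)⁻¹))
    rw [hd.fderiv, ContinuousLinearMap.comp_smul, ContinuousLinearMap.comp_id, norm_smul,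
      Real.norm_eq_abs, abs_of_nonneg (by positivity), div_eq_inv_mul]
    gcongr
    exact hK _
  · intro x
    have h0 : Tendsto (fun n : ℕ => ((n : ℝ) + 1)⁻¹ • x) atTop (𝓝 ((0 : ℝ) • x)) := by
      refine Tendsto.smul_const ?_ x
      simpa using tendsto_one_div_add_atTop_nhds_zero_nat (𝕜 := ℝ)
    rw [zero_smul] at h0
    have := (b.continuous.tendsto 0).comp h0
    have h1 : b 0 = 1 := b.one_of_mem_closedBall (by simp [b.rIn_pos.le])
    rwa [h1] at this

lemma trunc_bound {N : ℕ} (u χ : EuclideanSpace ℝ (Fin N) → ℝ) (hu : ContDiff ℝ 1 u)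
    (hχ : ContDiff ℝ 1 χ) (K m : ℝ) (hm : 1 ≤ m) (hK : 0 ≤ K) (x : EuclideanSpace ℝ (Fin N))
    (h1 : |χ x| ≤ 1) (h2 : ‖fderiv ℝ χ x‖ ≤ K / m) :
    ‖fderiv ℝ (fun y => χ y * (u y ^ 2 / (1 + u y ^ 2 / m))) x‖
      ≤ 2 * (|u x| * √(gradsq u x)) + K * |u x| := by
  have hm0 : 0 < m := by linarith
  have hF : HasDerivAt (fun s : ℝ => s ^ 2 / (1 + s ^ 2 / m))
      (2 * u x / (1 + u x ^ 2 / m) ^ 2) (u x) := by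
    have hne : 1 + u x ^ 2 / m ≠ 0 := by positivity
    have ha : HasDerivAt (fun s : ℝ => s ^ 2) (2 * u x) (u x) := by
      simpa using hasDerivAt_pow 2 (u x)
    have hq := ha.div ((ha.div_const m).const_add 1) hne
    have hv : 2 * u x / (1 + u x ^ 2 / m) ^ 2 = (2 * u x * (1 + u x ^ 2 / m)
        - u x ^ 2 * (2 * u x / m)) / (1 + u x ^ 2 / m) ^ 2 := by
      congr 1
      field_simp
      ring
    rw [hv]
    exact hq
  have hu' := (hu.differentiable one_ne_zero x).hasFDerivAt
  have hχ' := (hχ.differentiable one_ne_zero x).hasFDerivAt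
  have hc := hF.comp_hasFDerivAt x hu'
  have hd := hχ'.mul hc
  have he : fderiv ℝ (fun y => χ y * (u y ^ 2 / (1 + u y ^ 2 / m))) x = _ := hd.fderiv
  rw [he]
  refine (norm_add_le _ _).trans ?_
  simp only [norm_smul, Real.norm_eq_abs, Function.comp]
  have hD : 1 ≤ 1 + u x ^ 2 / m := by
    have : 0 ≤ u x ^ 2 / m := by positivity
    linarith
  have hg := norm_fderiv_le_gradsq u x
  gcongr ?_ + ?_
  · have e1 : |2 * u x / (1 + u x ^ 2 / m) ^ 2| ≤ 2 * |u x| := by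
      rw [abs_div, abs_mul, abs_two, abs_of_nonneg (a := (1 + u x ^ 2 / m) ^ 2) (by positivity)]
      exact div_le_self (by positivity) (one_le_pow₀ hD)
    calc |χ x| * (|2 * u x / (1 + u x ^ 2 / m) ^ 2| * ‖fderiv ℝ u x‖)
        ≤ 1 * (2 * |u x| * √(gradsq u x)) := by gcongr
      _ = _ := by ring
  · have e2 : |u x ^ 2 / (1 + u x ^ 2 / m)| ≤ m * |u x| := by
      rw [abs_of_nonneg (by positivity), div_le_iff₀ (by positivity)]
      have : m * |u x| * (1 + u x ^ 2 / m) = |u x| * (m + |u x| ^ 2) := by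
        rw [sq_abs]; field_simp
      rw [this, ← sq_abs]
      have := abs_nonneg (u x)
      nlinarith [mul_nonneg this (sq_nonneg (|u x| - 1)), mul_nonneg this (sub_nonneg.2 hm)]
    calc |u x ^ 2 / (1 + u x ^ 2 / m)| * ‖fderiv ℝ χ x‖
        ≤ (m * |u x|) * (K / m) := by gcongr
      _ = _ := by field_simp

/-- Embedding of `X = {u ∈ H¹ : ∫ u²|∇u|² < ∞}` into `L^{p+1}(ℝ^N)` for
`1 < p ≤ (3N+2)/(N−2)`, `N ≥ 3`. -/
theorem stmt17 (N : ℕ) (hN : 3 ≤ N) (p : ℝ) (hp : 1 < p)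
    (hpmax : p ≤ (3 * (N : ℝ) + 2) / ((N : ℝ) - 2))
    (u : EuclideanSpace ℝ (Fin N) → ℝ) (hsm : ContDiff ℝ (⊤ : ℕ∞) u)
    (h1 : Integrable (fun x => (u x) ^ 2))
    (h2 : Integrable (fun x => gradsq u x))
    (h3 : Integrable (fun x => (u x) ^ 2 * gradsq u x)) :
    Integrable (fun x => |u x| ^ (p + 1)) := by
  have hN' : (3 : ℝ) ≤ N := by exact_mod_cast hN
  have hu : ContDiff ℝ 1 u := hsm.of_le (by exact_mod_cast le_top)
  have hcu := hu.continuous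
  have hgn : ∀ x, 0 ≤ gradsq u x := fun x => Finset.sum_nonneg fun i _ => sq_nonneg _
  have hcg : Continuous (fun x => gradsq u x) := by
    unfold gradsq pd
    have := hu.continuous_fderiv one_ne_zero
    fun_prop
  obtain ⟨χ, K, hK, hχ, hχc, hχ1, hχd, hχt⟩ := exists_cutoff N
  set G : EuclideanSpace ℝ (Fin N) → ℝ := fun x => 2 * (|u x| * √(gradsq u x)) + K * |u x| with hG
  have hG2 : MemLp G 2 := by
    have a1 : MemLp (fun x => |u x| * √(gradsq u x)) 2 volume := by
      rw [memLp_two_iff_integrable_sq (by fun_prop)]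
      refine h3.congr (Eventually.of_forall fun x => ?_)
      simp only [mul_pow, sq_abs, Real.sq_sqrt (hgn x)]
    have a2 : MemLp (fun x => |u x|) 2 volume := by
      rw [memLp_two_iff_integrable_sq (by fun_prop)]
      simpa only [sq_abs] using h1
    exact (a1.const_mul 2).add (a2.const_mul K)
  set f : ℕ → EuclideanSpace ℝ (Fin N) → ℝ := fun n y =>
    χ n y * (u y ^ 2 / (1 + u y ^ 2 / ((n : ℝ) + 1))) with hf
  have hpos : ∀ (n : ℕ) y, 1 + u y ^ 2 / ((n : ℝ) + 1) ≠ 0 := fun n y => by positivity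
  have hfC : ∀ n, ContDiff ℝ 1 (f n) := fun n =>
    (hχ n).mul ((hu.pow 2).div (contDiff_const.add ((hu.pow 2).div_const _)) (hpos n))
  have hfc : ∀ n, HasCompactSupport (f n) := fun n => (hχc n).mul_right
  have hft : ∀ x, Tendsto (fun n => f n x) atTop (𝓝 (u x ^ 2)) := by
    intro x
    have t0 : Tendsto (fun n : ℕ => u x ^ 2 / ((n : ℝ) + 1)) atTop (𝓝 0) := by
      have := (tendsto_one_div_add_atTop_nhds_zero_nat (𝕜 := ℝ)).const_mul (u x ^ 2)
      simpa [div_eq_mul_inv] using this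
    have t1 := (hχt x).mul ((tendsto_const_nhds (x := u x ^ 2)).div
      ((tendsto_const_nhds (x := (1 : ℝ))).add t0) (by norm_num))
    simpa using t1
  have hq0 : (0 : ℝ) < 2 * N / (N - 2) := by
    apply div_pos <;> linarith
  let q : NNReal := ⟨2 * N / (N - 2), hq0.le⟩
  have hqv : (q : ℝ) = 2 * N / (N - 2) := rfl
  have hS : ∀ n, eLpNorm (f n) q volume ≤
      eLpNormLESNormFDerivOfEqInnerConst (volume : Measure (EuclideanSpace ℝ (Fin N))) (2 : NNReal)
        * eLpNorm G 2 volume := by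
    intro n
    refine (eLpNorm_le_eLpNorm_fderiv_of_eq_inner volume (hfC n) (hfc n) (p := 2) (p' := q)
      (by norm_num) (by simp; omega) ?_).trans ?_
    · rw [hqv]
      simp only [finrank_euclideanSpace, Fintype.card_fin, NNReal.coe_inv, NNReal.coe_ofNat]
      have : (N : ℝ) - 2 ≠ 0 := by linarith
      have : (N : ℝ) ≠ 0 := by linarith
      field_simp
    · gcongr
      refine eLpNorm_mono_real fun x => ?_
      exact trunc_bound u (χ n) hu (hχ n) K _ (by simp) hK x (hχ1 n x) (hχd n x)
  have hL : MemLp (fun x => u x ^ 2) q volume := by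
    refine ⟨by fun_prop, ?_⟩
    refine (Lp.eLpNorm_lim_le_liminf_eLpNorm (f := f)
      (fun n => (hfC n).continuous.aestronglyMeasurable) _ (Eventually.of_forall hft)).trans_lt ?_
    refine lt_of_le_of_lt (liminf_le_of_frequently_le' (Frequently.of_forall hS)) ?_
    exact ENNReal.mul_lt_top (by simp) hG2.2
  have hI := hL.integrable_norm_rpow (by
    have : q ≠ 0 := fun h => hq0.ne' (by rw [← hqv, h]; rfl)
    exact_mod_cast this) (by simp)
  refine (h1.add hI).mono' (by
    refine Continuous.aestronglyMeasurable ?_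
    exact hcu.abs.rpow_const fun x => Or.inr (by linarith)) (Eventually.of_forall fun x => ?_)
  have ha := abs_nonneg (u x)
  rw [Real.norm_eq_abs, abs_of_nonneg (by positivity)]
  simp only [Pi.add_apply, ENNReal.coe_toReal, norm_pow, Real.norm_eq_abs]
  have e2 : (|u x| ^ 2) ^ (q : ℝ) = |u x| ^ (2 * (q : ℝ)) := by
    rw [Real.rpow_mul ha]; norm_num
  rw [e2, ← sq_abs (u x)]
  have hpq : p + 1 ≤ 2 * (q : ℝ) := by
    have : (3 * (N : ℝ) + 2) / ((N : ℝ) - 2) + 1 = 2 * (q : ℝ) := by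
      rw [hqv]
      have : (N : ℝ) - 2 ≠ 0 := by linarith
      field_simp
      ring
    linarith
  rcases le_total 1 |u x| with h | h
  · have := Real.rpow_le_rpow_of_exponent_le h hpq
    have := sq_nonneg |u x|
    linarith
  · have : |u x| ^ (p + 1) ≤ |u x| ^ (2 : ℝ) :=
      Real.rpow_le_rpow_of_exponent_ge' ha h (by norm_num) (by linarith)
    rw [Real.rpow_two] at this
    have := Real.rpow_nonneg ha (2 * (q : ℝ))
    linarith

end
end
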